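/- Let v ∈ M_n(ℂ) be a unitary with v^k = 1 such that every eigenspace E_j = ker(v − ζ^j·1), j ∈ {0,…,k−1}, is nonzero. Then the least cardinality of a family of normal matrices a₁,…,a_N ∈ M_n(ℂ) satisfying v a_i v* = ζ a_i, σ(a_i) ⊆ ✲_k, and Σ_i a_i a_i* invertible, equals ⌈(max_j dim E_j)/(min_j dim E_j)⌉; equivalently, wdim(M_n(ℂ), Ad v) = ⌈(max_j dim E_j)/(min_j dim E_j)⌉ − 1. -/

import Mathlib

/-- `ζ = exp(2πi/k)`. -/
noncomputable def ltZeta (k : ℕ) : ℂ := Complex.exp (2 * Real.pi * Complex.I / k)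

/-- The "asterisk" set `✲_k = {t·ζ^m : t ∈ [0,1], 0 ≤ m < k} ⊆ ℂ`. -/
noncomputable def ltAsterisk (k : ℕ) : Set ℂ :=
  {z | ∃ t ∈ Set.Icc (0 : ℝ) 1, ∃ m : ℕ, m < k ∧ z = (t : ℂ) * ltZeta k ^ m}

/-- Dimension of the `ζ^j`-eigenspace `E_j = ker(v - ζ^j·1)` of a matrix `v`. -/
noncomputable def eigDim (n k : ℕ) (v : Matrix (Fin n) (Fin n) ℂ) (j : ℕ) : ℕ :=
  Module.finrank ℂ ↥(Module.End.eigenspace (Matrix.toLin' v) (ltZeta k ^ j))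

/-- `max_j dim E_j`. -/
noncomputable def maxEigDim (n k : ℕ) (v : Matrix (Fin n) (Fin n) ℂ) : ℕ :=
  Finset.univ.sup fun j : Fin k => eigDim n k v (j : ℕ)

/-- `min_j dim E_j`. -/
noncomputable def minEigDim (n k : ℕ) (v : Matrix (Fin n) (Fin n) ℂ) : ℕ :=
  sInf {d : ℕ | ∃ j : Fin k, d = eigDim n k v (j : ℕ)}

/-- The quotient spread `⌈(max_j dim E_j)/(min_j dim E_j)⌉`. -/
noncomputable def qtMat (n k : ℕ) (v : Matrix (Fin n) (Fin n) ℂ) : ℕ :=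
  ⌈(maxEigDim n k v : ℚ) / (minEigDim n k v : ℚ)⌉₊

/-- The weak local-triviality dimension of the `ℤ/k`-action `Ad v` on `M_n(ℂ)`. -/
noncomputable def wdimConj (n k : ℕ) (v : Matrix (Fin n) (Fin n) ℂ) : ℕ∞ :=
  sInf ((fun N : ℕ => (N : ℕ∞)) '' {N : ℕ | ∃ a : Fin (N + 1) → Matrix (Fin n) (Fin n) ℂ,
    (∀ i, IsStarNormal (a i)) ∧
    (∀ i, v * a i * star v = ltZeta k • a i) ∧
    (∀ i, spectrum ℂ (a i) ⊆ ltAsterisk k) ∧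
    IsUnit (∑ i, a i * star (a i))})

/-!
If `v a v* = ζ a` with `a` normal, then `a` maps each eigenspace `E_μ` of `v` into `E_{ζμ}`, and it
is injective on its range because `ker a = ker a* = (range a)ᗮ`. Hence `dim (range a ∩ E_μ)` does
not decrease along the cycle `μ ↦ ζμ`, so it is at most the smallest eigenspace dimension `m`. If
`S = ∑ aᵢ aᵢ*` is invertible, it commutes with `v`, so each `E_μ = S E_μ` is spanned by the
subspaces `range aᵢ ∩ E_μ`: the largest dimension is at most `N m` for a family of size `N`.

Conversely, `m` orthonormal vectors in each eigenspace carry a partial isometry that permutes them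
cyclically from one eigenspace to the next; its nonzero spectrum consists of `k`-th roots of unity.
Any `N` with `N m ≥ max_j dim E_j` suffices for `N` such choices to exhaust an orthonormal
eigenbasis of `v`, which makes `∑ aᵢ aᵢ*` invertible.
-/

open Matrix Module

section StarAlgebra

variable {R A : Type*} [CommSemiring R] [Semiring A] [StarRing A] [Algebra R A] {v a : A} {ζ : R}

theorem mul_eq_smul_mul_of_conj_eq_smul (hv : v ∈ unitary A) (ha : v * a * star v = ζ • a) :
    v * a = ζ • (a * v) := by
  rw [← smul_mul_assoc, ← ha, mul_assoc _ (star v), Unitary.star_mul_self_of_mem hv, mul_one]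

variable [StarRing R] [StarModule R A]

theorem conj_star_eq_star_smul (ha : v * a * star v = ζ • a) :
    v * star a * star v = star ζ • star a := by
  rw [← star_smul, ← ha, star_mul, star_mul, star_star, mul_assoc]

theorem commute_mul_star_of_conj_eq_smul (hv : v ∈ unitary A) (hζ : ζ ∈ unitary R)
    (ha : v * a * star v = ζ • a) : Commute v (a * star a) :=
  calc v * (a * star a) = ζ • (a * (v * star a)) := by
        rw [← mul_assoc, mul_eq_smul_mul_of_conj_eq_smul hv ha, smul_mul_assoc, mul_assoc]
    _ = (ζ * star ζ) • (a * star a * v) := by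
        rw [mul_eq_smul_mul_of_conj_eq_smul hv (conj_star_eq_star_smul ha), mul_smul_comm,
          smul_smul, mul_assoc]
    _ = a * star a * v := by rw [Unitary.mul_star_self_of_mem hζ, one_smul]

end StarAlgebra

section Twisted

variable {K V ι : Type*} [Field K] [AddCommGroup V] [Module K V] {v a : End K V} {ζ : K}

theorem mapsTo_eigenspace_of_mul_eq_smul_mul (h : v * a = ζ • (a * v)) (μ : K) :
    Set.MapsTo a (v.eigenspace μ) (v.eigenspace (ζ * μ)) := by
  intro x hx
  rw [SetLike.mem_coe, End.mem_eigenspace_iff] at hx ⊢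
  calc v (a x) = ζ • a (v x) := LinearMap.congr_fun h x
    _ = (ζ * μ) • a x := by rw [hx, map_smul, smul_smul]

variable [FiniteDimensional K V]

theorem finrank_range_inf_eigenspace_le_mul (h : v * a = ζ • (a * v))
    (ha : Disjoint (LinearMap.ker a) (LinearMap.range a)) (μ : K) :
    finrank K ↥(LinearMap.range a ⊓ v.eigenspace μ) ≤
      finrank K ↥(LinearMap.range a ⊓ v.eigenspace (ζ * μ)) := by
  have hmaps : ∀ x ∈ LinearMap.range a ⊓ v.eigenspace μ,
      a x ∈ LinearMap.range a ⊓ v.eigenspace (ζ * μ) :=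
    fun x hx ↦ ⟨LinearMap.mem_range_self a x, mapsTo_eigenspace_of_mul_eq_smul_mul h μ hx.2⟩
  refine LinearMap.finrank_le_finrank_of_injective (f := a.restrict hmaps) ?_
  exact (LinearMap.injective_restrict_iff hmaps).2 (ha.symm.mono_left inf_le_left)

theorem finrank_range_inf_eigenspace_le_pow_mul (h : v * a = ζ • (a * v))
    (ha : Disjoint (LinearMap.ker a) (LinearMap.range a)) (μ : K) (r : ℕ) :
    finrank K ↥(LinearMap.range a ⊓ v.eigenspace μ) ≤
      finrank K ↥(LinearMap.range a ⊓ v.eigenspace (ζ ^ r * μ)) := by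
  induction r with
  | zero => rw [pow_zero, one_mul]
  | succ r ih =>
    rw [pow_succ', mul_assoc]
    exact ih.trans (finrank_range_inf_eigenspace_le_mul h ha _)

variable [Fintype ι]

theorem finrank_iSup_le_sum (W : ι → Submodule K V) :
    finrank K ↥(⨆ i, W i) ≤ ∑ i, finrank K (W i) := by
  rw [← Finset.sup_univ_eq_iSup]
  exact Finset.le_sum_of_subadditive (fun W : Submodule K V ↦ finrank K W) (finrank_bot K V).le
    (fun _ _ ↦ Submodule.finrank_add_le_finrank_add_finrank _ _) _ W

theorem finrank_eigenspace_le_sum_of_isUnit_sum {s : ι → End K V} (hs : ∀ i, Commute v (s i))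
    (hu : IsUnit (∑ i, s i)) (μ : K) :
    finrank K (v.eigenspace μ) ≤
      ∑ i, finrank K ↥(LinearMap.range (s i) ⊓ v.eigenspace μ) := by
  obtain ⟨u, hu⟩ := hu
  have hinv : Commute v ↑u⁻¹ :=
    Commute.units_inv_right (hu ▸ Commute.sum_right _ _ _ fun i _ ↦ hs i)
  refine le_trans (Submodule.finrank_mono fun x hx ↦ ?_) (finrank_iSup_le_sum _)
  let y := (↑u⁻¹ : End K V) x
  have hy : y ∈ v.eigenspace μ := End.mapsTo_genEigenspace_of_comm hinv μ 1 hx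
  have hxy : ∑ i, s i y = x := by
    rw [← LinearMap.sum_apply, ← hu, ← End.mul_apply, u.mul_inv, End.one_apply]
  rw [← hxy]
  exact Submodule.sum_mem_iSup fun i ↦
    ⟨LinearMap.mem_range_self _ y, End.mapsTo_genEigenspace_of_comm (hs i) μ 1 hy⟩

end Twisted

section LowerBound

variable {𝕜 ι κ : Type*} [RCLike 𝕜] [Fintype ι] [DecidableEq ι] {v : Matrix ι ι 𝕜} {ζ : 𝕜}

open scoped ComplexOrder in
theorem disjoint_ker_range_toLin'_of_isStarNormal {a : Matrix ι ι 𝕜} (ha : IsStarNormal a) :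
    Disjoint (LinearMap.ker (toLin' a)) (LinearMap.range (toLin' a)) := by
  have hker (x : ι → 𝕜) : aᴴ *ᵥ x = 0 ↔ a *ᵥ x = 0 := by
    rw [← self_mul_conjTranspose_mulVec_eq_zero, ← star_eq_conjTranspose,
      ← ha.star_comm_self.eq, star_eq_conjTranspose, conjTranspose_mul_self_mulVec_eq_zero]
  rw [Submodule.disjoint_def]
  rintro _ hx ⟨y, rfl⟩
  rw [LinearMap.mem_ker, toLin'_apply, ← hker, toLin'_apply, mulVec_mulVec] at hx
  exact (conjTranspose_mul_self_mulVec_eq_zero a y).1 hx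

theorem finrank_eigenspace_le_card_mul [Fintype κ] (hv : v ∈ unitary (Matrix ι ι 𝕜))
    (hζ : ζ ∈ unitary 𝕜) {a : κ → Matrix ι ι 𝕜} (hnormal : ∀ i, IsStarNormal (a i))
    (ha : ∀ i, v * a i * star v = ζ • a i) (hu : IsUnit (∑ i, a i * star (a i))) (μ : 𝕜) (r : ℕ) :
    finrank 𝕜 (End.eigenspace (toLin' v) μ) ≤
      Fintype.card κ * finrank 𝕜 (End.eigenspace (toLin' v) (ζ ^ r * μ)) := by
  have hcomm (i) : Commute (toLin' v) (toLin' (a i * star (a i))) :=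
    (commute_mul_star_of_conj_eq_smul hv hζ (ha i)).map toLinAlgEquiv'
  have hsum : IsUnit (∑ i, toLin' (a i * star (a i))) := by
    rwa [← map_sum, isUnit_toLin'_iff]
  have hrange (i) : LinearMap.range (toLin' (a i * star (a i))) ≤ LinearMap.range (toLin' (a i)) :=
    toLin'_mul (a i) (star (a i)) ▸ LinearMap.range_comp_le_range _ _
  have htwist (i) : toLin' v * toLin' (a i) = ζ • (toLin' (a i) * toLin' v) := by
    rw [End.mul_eq_comp, End.mul_eq_comp, ← toLin'_mul, ← toLin'_mul, ← map_smul,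
      mul_eq_smul_mul_of_conj_eq_smul hv (ha i)]
  calc finrank 𝕜 (End.eigenspace (toLin' v) μ)
    _ ≤ ∑ i, finrank 𝕜 ↥(LinearMap.range (toLin' (a i * star (a i))) ⊓
          End.eigenspace (toLin' v) μ) := finrank_eigenspace_le_sum_of_isUnit_sum hcomm hsum μ
    _ ≤ ∑ i, finrank 𝕜 ↥(LinearMap.range (toLin' (a i)) ⊓ End.eigenspace (toLin' v) μ) :=
      Finset.sum_le_sum fun i _ ↦ Submodule.finrank_mono (inf_le_inf_right _ (hrange i))
    _ ≤ ∑ i, finrank 𝕜 ↥(LinearMap.range (toLin' (a i)) ⊓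
          End.eigenspace (toLin' v) (ζ ^ r * μ)) :=
      Finset.sum_le_sum fun i _ ↦ finrank_range_inf_eigenspace_le_pow_mul (htwist i)
        (disjoint_ker_range_toLin'_of_isStarNormal (hnormal i)) μ r
    _ ≤ ∑ _i : κ, finrank 𝕜 (End.eigenspace (toLin' v) (ζ ^ r * μ)) :=
      Finset.sum_le_sum fun i _ ↦ Submodule.finrank_mono inf_le_right
    _ = _ := by simp

end LowerBound

section IsometryConj

variable {R ι κ : Type*} [CommSemiring R] [StarRing R] [Fintype ι] [Fintype κ] [DecidableEq κ]

/-- The embedding `X ↦ W X Wᴴ` of matrix algebras given by an isometry `W`. It transports a matrix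
indexed by an orthonormal system (the columns of `W`) to an operator on the whole space that
vanishes on the complement; it is non-unital unless `W` is unitary. -/
def isometryConj (W : Matrix ι κ R) (hW : Wᴴ * W = 1) : Matrix κ κ R →⋆ₙₐ[R] Matrix ι ι R where
  toFun X := W * X * Wᴴ
  map_smul' c X := by rw [Matrix.mul_smul, Matrix.smul_mul, MonoidHom.id_apply]
  map_zero' := by rw [Matrix.mul_zero, Matrix.zero_mul]
  map_add' X Y := by rw [Matrix.mul_add, Matrix.add_mul]
  map_mul' X Y := by
    rw [Matrix.mul_assoc (W * X), ← Matrix.mul_assoc Wᴴ, ← Matrix.mul_assoc Wᴴ, hW, Matrix.one_mul]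
    simp only [Matrix.mul_assoc]
  map_star' X := by
    simp only [star_eq_conjTranspose, conjTranspose_mul, conjTranspose_conjTranspose,
      Matrix.mul_assoc]

theorem spectrum_isometryConj_subset {K : Type*} [Field K] [StarRing K] [DecidableEq ι]
    {W : Matrix ι κ K} (hW : Wᴴ * W = 1) (X : Matrix κ κ K) :
    spectrum K (isometryConj W hW X) ⊆ spectrum K X ∪ {0} := by
  rw [← quasispectrum_eq_spectrum_union_zero]
  exact (spectrum_subset_quasispectrum K _).trans
    (NonUnitalAlgHom.quasispectrum_apply_subset (isometryConj W hW) X)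

variable {W : Matrix ι κ R} (hW : Wᴴ * W = 1)

theorem isometryConj_apply (X : Matrix κ κ R) : isometryConj W hW X = W * X * Wᴴ := rfl

theorem conj_isometryConj {v : Matrix ι ι R} {D : Matrix κ κ R} (hvW : v * W = W * D)
    (X : Matrix κ κ R) : v * isometryConj W hW X * star v = isometryConj W hW (D * X * Dᴴ) := by
  calc v * isometryConj W hW X * star v = v * W * X * (v * W)ᴴ := by
        simp only [isometryConj_apply, star_eq_conjTranspose, conjTranspose_mul, Matrix.mul_assoc]
    _ = isometryConj W hW (D * X * Dᴴ) := by
        simp only [hvW, isometryConj_apply, conjTranspose_mul, Matrix.mul_assoc]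

end IsometryConj

section PermMatrix

variable {R κ : Type*} [CommSemiring R] [Fintype κ] [DecidableEq κ]

theorem permMatrixHom_apply_apply (σ : Equiv.Perm κ) (p q : κ) :
    (permMatrixHom σ : Matrix κ κ R) p q = if p = σ q then 1 else 0 := by
  simp [PEquiv.toMatrix_apply, Equiv.Perm.inv_def, Equiv.symm_apply_eq]

variable [StarRing R]

theorem star_permMatrixHom (σ : Equiv.Perm κ) :
    star (permMatrixHom σ : Matrix κ κ R) = permMatrixHom σ⁻¹ :=
  conjTranspose_permMatrix _

theorem permMatrixHom_mul_star_self (σ : Equiv.Perm κ) :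
    (permMatrixHom σ : Matrix κ κ R) * star (permMatrixHom σ) = 1 := by
  rw [star_permMatrixHom, ← map_mul, mul_inv_cancel, map_one]

theorem isStarNormal_permMatrixHom (σ : Equiv.Perm κ) :
    IsStarNormal (permMatrixHom σ : Matrix κ κ R) :=
  ⟨by rw [star_permMatrixHom]; exact (Commute.refl σ).inv_left.map permMatrixHom⟩

theorem diagonal_conj_permMatrixHom {σ : Equiv.Perm κ} {d : κ → R} {ζ : R}
    (hdσ : ∀ p, d (σ p) = ζ * d p) (hd : ∀ p, d p ∈ unitary R) :
    diagonal d * permMatrixHom σ * (diagonal d)ᴴ = ζ • permMatrixHom σ := by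
  ext p q
  rw [diagonal_conjTranspose, mul_diagonal, diagonal_mul, Matrix.smul_apply, smul_eq_mul,
    Pi.star_apply]
  simp only [permMatrixHom_apply_apply]
  split_ifs with h
  · rw [h, hdσ, mul_one, mul_one, mul_assoc, Unitary.mul_star_self_of_mem (hd q), mul_one]
  · rw [mul_zero, mul_zero, zero_mul]

theorem pow_eq_one_of_mem_spectrum {K A : Type*} [Field K] [Ring A] [Algebra K A] {a : A} {z : K}
    {k : ℕ} (ha : a ^ k = 1) (hz : z ∈ spectrum K a) : z ^ k = 1 := by
  have : Nontrivial A := by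
    by_contra h
    rw [not_nontrivial_iff_subsingleton] at h
    rw [spectrum.of_subsingleton] at hz
    exact hz
  have := spectrum.pow_mem_pow a k hz
  rwa [ha, spectrum.one_eq] at this

end PermMatrix

section Diagonalization

theorem finrank_eigenspace_conjRingEquiv {K V W : Type*} [Field K] [AddCommGroup V] [Module K V]
    [AddCommGroup W] [Module K W] (e : V ≃ₗ[K] W) (f : End K V) (μ : K) :
    finrank K (End.eigenspace (e.conjRingEquiv f) μ) = finrank K (f.eigenspace μ) := by
  have hmap : End.eigenspace (e.conjRingEquiv f) μ = (f.eigenspace μ).map (e : V →ₗ[K] W) := by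
    ext x
    rw [Submodule.mem_map_equiv, End.mem_eigenspace_iff, End.mem_eigenspace_iff,
      LinearEquiv.conjRingEquiv_apply_apply, ← e.eq_symm_apply, map_smul]
  rw [hmap, LinearEquiv.finrank_map_eq]

theorem iSup_eigenspace_pow_eq_top_of_pow_eq_one {K V : Type*} [Field K] [IsAlgClosed K]
    [AddCommGroup V] [Module K V] [FiniteDimensional K V] {f : End K V} {k : ℕ} [NeZero k] {ζ : K}
    (hζ : IsPrimitiveRoot ζ k) (hf : f ^ k = 1) :
    ⨆ j : Fin k, f.eigenspace (ζ ^ (j : ℕ)) = ⊤ := by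
  have hk : (k : K) ≠ 0 := hζ.neZero'.out
  have hsemi : f.IsSemisimple :=
    End.isSemisimple_of_squarefree_aeval_eq_zero
      (Polynomial.separable_X_pow_sub_C 1 hk one_ne_zero).squarefree (by simp [hf])
  rw [eq_top_iff, ← hsemi.iSup_eigenspace_eq_top]
  refine iSup_le fun μ x hx ↦ ?_
  obtain rfl | hx0 := eq_or_ne x 0
  · exact zero_mem _
  have hμ : μ ^ k = 1 := by
    have h := End.HasEigenvector.pow_apply ⟨hx, hx0⟩ k
    rw [hf, End.one_apply] at h
    exact smul_left_injective K hx0 (by simpa using h.symm)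
  obtain ⟨j, hj, rfl⟩ := hζ.eq_pow_of_pow_eq_one hμ
  exact Submodule.mem_iSup_of_mem ⟨j, hj⟩ hx

theorem orthogonalFamily_eigenspace_of_linearIsometry {𝕜 E : Type*} [RCLike 𝕜]
    [NormedAddCommGroup E] [InnerProductSpace 𝕜 E] (f : E →ₗᵢ[𝕜] E) :
    OrthogonalFamily 𝕜 (fun μ ↦ End.eigenspace f.toLinearMap μ)
      fun μ ↦ (End.eigenspace f.toLinearMap μ).subtypeₗᵢ := by
  rintro μ ν hμν ⟨x, hx⟩ ⟨y, hy⟩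
  rw [End.mem_eigenspace_iff] at hx hy
  change inner 𝕜 x y = 0
  by_contra hxy
  have hx0 : inner 𝕜 x x ≠ 0 := by
    rw [inner_self_ne_zero]
    rintro rfl
    exact hxy (inner_zero_left y)
  have hx' : f x = μ • x := hx
  have hy' : f y = ν • y := hy
  have hμμ : starRingEnd 𝕜 μ * μ = 1 := by
    have h := f.inner_map_map x x
    rw [hx', inner_smul_left, inner_smul_right, ← mul_assoc] at h
    exact mul_eq_right₀ hx0 |>.1 h
  have hμν' : starRingEnd 𝕜 μ * ν = 1 := by
    have h := f.inner_map_map x y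
    rw [hx', hy', inner_smul_left, inner_smul_right, ← mul_assoc] at h
    exact mul_eq_right₀ hxy |>.1 h
  exact hμν (mul_left_cancel₀ (left_ne_zero_of_mul_eq_one hμμ) (hμμ.trans hμν'.symm))

theorem exists_orthonormalBasis_eigenvector {E : Type*} [NormedAddCommGroup E]
    [InnerProductSpace ℂ E] [FiniteDimensional ℂ E] {f : E →ₗᵢ[ℂ] E} {k : ℕ} [NeZero k] {ζ : ℂ}
    (hζ : IsPrimitiveRoot ζ k) (hf : f.toLinearMap ^ k = 1) {d : Fin k → ℕ}
    (hd : ∀ j : Fin k, finrank ℂ (End.eigenspace f.toLinearMap (ζ ^ (j : ℕ))) = d j) :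
    ∃ b : OrthonormalBasis (Σ j, Fin (d j)) ℂ E, ∀ x, f (b x) = ζ ^ (x.1 : ℕ) • b x := by
  let F (j : Fin k) := End.eigenspace f.toLinearMap (ζ ^ (j : ℕ))
  have horth : OrthogonalFamily ℂ (fun j ↦ F j) fun j ↦ (F j).subtypeₗᵢ :=
    (orthogonalFamily_eigenspace_of_linearIsometry f).comp
      fun i j h ↦ Fin.ext (hζ.pow_inj i.2 j.2 h)
  have hinternal : DirectSum.IsInternal F := by
    rw [horth.isInternal_iff, iSup_eigenspace_pow_eq_top_of_pow_eq_one hζ hf,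
      Submodule.top_orthogonal_eq_bot]
  refine ⟨hinternal.collectedOrthonormalBasis horth
    fun j ↦ (stdOrthonormalBasis ℂ (F j)).reindex (finCongr (hd j)), fun x ↦ ?_⟩
  exact End.mem_eigenspace_iff.1 (hinternal.collectedOrthonormalBasis_mem horth _ x)

theorem exists_diagonalizing_matrix {ι : Type*} [Fintype ι] [DecidableEq ι] {k : ℕ} [NeZero k]
    {ζ : ℂ} {v : Matrix ι ι ℂ} (hζ : IsPrimitiveRoot ζ k) (hv : v ∈ unitary (Matrix ι ι ℂ))
    (hvk : v ^ k = 1) {d : Fin k → ℕ}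
    (hd : ∀ j : Fin k, finrank ℂ (End.eigenspace (toLin' v) (ζ ^ (j : ℕ))) = d j) :
    ∃ U : Matrix ι (Σ j, Fin (d j)) ℂ,
      Uᴴ * U = 1 ∧ U * Uᴴ = 1 ∧ v * U = U * diagonal fun x ↦ ζ ^ (x.1 : ℕ) := by
  let f : EuclideanSpace ℂ ι →ₗᵢ[ℂ] EuclideanSpace ℂ ι :=
    (Unitary.linearIsometryEquiv ⟨toEuclideanCLM (𝕜 := ℂ) v, Unitary.map_mem _ hv⟩).toLinearIsometry
  have hf : f.toLinearMap = (WithLp.linearEquiv 2 ℂ (ι → ℂ)).symm.conjRingEquiv (toLin' v) := rfl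
  have hfk : f.toLinearMap ^ k = 1 := by
    rw [hf, ← map_pow, ← toLin'_pow, hvk, toLin'_one]
    exact map_one _
  obtain ⟨b, hb⟩ := exists_orthonormalBasis_eigenvector hζ hfk (d := d)
    fun j ↦ by rw [hf, finrank_eigenspace_conjRingEquiv, hd]
  let e := EuclideanSpace.basisFun ι ℂ
  refine ⟨e.toBasis.toMatrix b, e.toMatrix_orthonormalBasis_conjTranspose_mul_self b,
    e.toMatrix_orthonormalBasis_self_mul_conjTranspose b, ?_⟩
  ext i x
  calc (v * e.toBasis.toMatrix b) i x
    _ = f (b x) i := rfl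
    _ = b x i * ζ ^ (x.1 : ℕ) := by rw [hb, PiLp.smul_apply, smul_eq_mul, mul_comm]
    _ = (e.toBasis.toMatrix b * diagonal fun y : Σ j, Fin (d j) ↦ ζ ^ (y.1 : ℕ)) i x := by
      rw [mul_diagonal]; rfl

end Diagonalization

section Asterisk

variable {k : ℕ} [NeZero k]

theorem isPrimitiveRoot_ltZeta : IsPrimitiveRoot (ltZeta k) k :=
  Complex.isPrimitiveRoot_exp k (NeZero.ne k)

theorem ltZeta_mem_unitary : ltZeta k ∈ unitary ℂ := by
  rw [Unitary.mem_iff_self_mul_star, Complex.star_def, Complex.mul_conj, Complex.normSq_eq_norm_sq,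
    isPrimitiveRoot_ltZeta.norm'_eq_one (NeZero.ne k), one_pow, Complex.ofReal_one]

theorem zero_mem_ltAsterisk : 0 ∈ ltAsterisk k :=
  ⟨0, Set.left_mem_Icc.2 zero_le_one, 0, NeZero.pos k, by rw [Complex.ofReal_zero, zero_mul]⟩

theorem mem_ltAsterisk_of_pow_eq_one {z : ℂ} (hz : z ^ k = 1) : z ∈ ltAsterisk k := by
  obtain ⟨m, hm, rfl⟩ := isPrimitiveRoot_ltZeta.eq_pow_of_pow_eq_one hz
  exact ⟨1, Set.right_mem_Icc.2 zero_le_one, m, hm, by rw [Complex.ofReal_one, one_mul]⟩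

theorem ltZeta_pow_val_add_one (j : Fin k) :
    ltZeta k ^ ((j + 1 : Fin k) : ℕ) = ltZeta k * ltZeta k ^ (j : ℕ) := by
  rw [Fin.val_add, Fin.val_one', Nat.add_mod_mod,
    ← pow_eq_pow_mod _ isPrimitiveRoot_ltZeta.pow_eq_one, pow_succ']

end Asterisk

section Construction

/-- The permutation of `Fin k × τ` that advances the first coordinate cyclically; its permutation
matrix moves the `j`-th block of a basis indexed by `Fin k × τ` onto the next one. -/
def blockShift (k : ℕ) [NeZero k] (τ : Type*) : Equiv.Perm (Fin k × τ) :=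
  Equiv.prodCongr (Equiv.addRight 1) (Equiv.refl τ)

theorem blockShift_pow_eq_one {k : ℕ} [NeZero k] {τ : Type*} : blockShift k τ ^ k = 1 := by
  ext1 p
  rw [Equiv.Perm.coe_pow, blockShift, Equiv.prodCongr_apply, Prod.map_iterate,
    Equiv.coe_addRight, add_right_iterate, Equiv.coe_refl, Function.iterate_id]
  have hk : k • (1 : Fin k) = 0 := by simpa using card_nsmul_eq_zero (x := (1 : Fin k))
  simp only [hk, add_zero]
  rfl

variable {k : ℕ} [NeZero k] {ι τ κ : Type*} [Fintype ι] [DecidableEq ι] [Fintype τ]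

theorem exists_isStarNormal_mul_star_eq [DecidableEq τ] {v : Matrix ι ι ℂ}
    {W : Matrix ι (Fin k × τ) ℂ} (hW : Wᴴ * W = 1)
    (hvW : v * W = W * diagonal fun p ↦ ltZeta k ^ (p.1 : ℕ)) :
    ∃ a : Matrix ι ι ℂ, IsStarNormal a ∧ v * a * star v = ltZeta k • a ∧
      spectrum ℂ a ⊆ ltAsterisk k ∧ a * star a = W * Wᴴ := by
  let T : Matrix (Fin k × τ) (Fin k × τ) ℂ := permMatrixHom (blockShift k τ)
  have hT : T ^ k = 1 := by rw [← map_pow, blockShift_pow_eq_one, map_one]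
  have := isStarNormal_permMatrixHom (R := ℂ) (blockShift k τ)
  refine ⟨isometryConj W hW T, IsStarNormal.map _ T, ?_, fun z hz ↦ ?_, ?_⟩
  · rw [conj_isometryConj hW hvW, ← map_smul, diagonal_conj_permMatrixHom
      (fun p ↦ ltZeta_pow_val_add_one p.1) fun p ↦ pow_mem ltZeta_mem_unitary _]
  · obtain hz | rfl := spectrum_isometryConj_subset hW T hz
    · exact mem_ltAsterisk_of_pow_eq_one (pow_eq_one_of_mem_spectrum hT hz)
    · exact zero_mem_ltAsterisk
  · rw [← map_star, ← map_mul, permMatrixHom_mul_star_self, isometryConj_apply, Matrix.mul_one]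

theorem exists_embedding_cover {m d N : ℕ} (hmd : m ≤ d) (hdN : d ≤ N * m) :
    ∃ g : Fin N → Fin m ↪ Fin d, ∀ x, ∃ i s, g i s = x := by
  refine ⟨fun i ↦ ⟨fun s ↦ ⟨min (i * m) (d - m) + s, by omega⟩, fun s t h ↦ ?_⟩, fun x ↦ ?_⟩
  · rw [Fin.mk.injEq] at h
    omega
  · have hm : 0 < m := by
      have := x.pos.trans_le hdN
      exact Nat.pos_of_mul_pos_left this
    have hlt : x / m < N := Nat.div_lt_of_lt_mul (by rw [mul_comm]; omega)
    have := Nat.div_add_mod' x m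
    have := Nat.mod_lt x hm
    refine ⟨⟨x / m, hlt⟩, ⟨x - min (x / m * m) (d - m), by omega⟩, Fin.ext ?_⟩
    exact Nat.add_sub_cancel' ((min_le_left _ _).trans (Nat.div_mul_le_self _ _))

open scoped ComplexOrder in
theorem isUnit_sum_submatrix_mul_conjTranspose {𝕜 β : Type*} [RCLike 𝕜] [Fintype β] [Fintype κ]
    {U : Matrix ι β 𝕜} (hU : U * Uᴴ = 1) {g : κ → τ → β} (hg : ∀ y, ∃ i s, g i s = y) :
    IsUnit (∑ i, U.submatrix id (g i) * (U.submatrix id (g i))ᴴ) := by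
  let M : Matrix ι (κ × τ) 𝕜 := U.submatrix id fun p ↦ g p.1 p.2
  have hM : ∑ i, U.submatrix id (g i) * (U.submatrix id (g i))ᴴ = M * Mᴴ := by
    ext i j
    simp only [Matrix.sum_apply, mul_apply, Fintype.sum_prod_type]
    rfl
  have hinj : Function.Injective M.vecMul := by
    intro x y hxy
    have hxyU : x ᵥ* U = y ᵥ* U := by
      ext b
      obtain ⟨i, s, rfl⟩ := hg b
      exact congr_fun hxy (i, s)
    simpa only [vecMul_vecMul, hU, vecMul_one] using congr_arg (· ᵥ* Uᴴ) hxyU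
  rw [hM]
  exact (PosDef.mul_conjTranspose_self M hinj).isUnit

theorem conjTranspose_submatrix_mul_submatrix {R ι α β : Type*} [Semiring R] [StarRing R]
    [Fintype ι] [DecidableEq α] [DecidableEq β] {U : Matrix ι β R} (hU : Uᴴ * U = 1) {e : α → β}
    (he : Function.Injective e) : (U.submatrix id e)ᴴ * U.submatrix id e = 1 := by
  rw [conjTranspose_submatrix, ← submatrix_mul _ _ _ _ _ Function.bijective_id, hU,
    submatrix_one e he]

theorem mul_submatrix_eq_submatrix_mul_diagonal {R ι α β : Type*} [Semiring R] [Fintype ι]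
    [Fintype α] [Fintype β] [DecidableEq α] [DecidableEq β] {v : Matrix ι ι R} {U : Matrix ι β R}
    {d : β → R} (hvU : v * U = U * diagonal d) (e : α → β) :
    v * U.submatrix id e = U.submatrix id e * diagonal (d ∘ e) := by
  calc v * U.submatrix id e = (v * U).submatrix id e := rfl
    _ = U.submatrix id e * diagonal (d ∘ e) := by
      ext i x
      rw [hvU, submatrix_apply, mul_diagonal, mul_diagonal, submatrix_apply, Function.comp_apply]

theorem exists_family_of_finrank_le_mul {v : Matrix ι ι ℂ} (hv : v ∈ unitary (Matrix ι ι ℂ))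
    (hvk : v ^ k = 1) {m N : ℕ}
    (hm : ∀ j : Fin k, m ≤ finrank ℂ (End.eigenspace (toLin' v) (ltZeta k ^ (j : ℕ))))
    (hN : ∀ j : Fin k, finrank ℂ (End.eigenspace (toLin' v) (ltZeta k ^ (j : ℕ))) ≤ N * m) :
    ∃ a : Fin N → Matrix ι ι ℂ,
      (∀ i, IsStarNormal (a i)) ∧ (∀ i, v * a i * star v = ltZeta k • a i) ∧
      (∀ i, spectrum ℂ (a i) ⊆ ltAsterisk k) ∧ IsUnit (∑ i, a i * star (a i)) := by
  obtain ⟨U, hUU, hUU', hvU⟩ := exists_diagonalizing_matrix isPrimitiveRoot_ltZeta hv hvk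
    fun j ↦ rfl
  choose h hcover using fun j ↦ exists_embedding_cover (hm j) (hN j)
  let g (i : Fin N) (p : Fin k × Fin m) : Σ j : Fin k,
    Fin (finrank ℂ (End.eigenspace (toLin' v) (ltZeta k ^ (j : ℕ)))) := ⟨p.1, h p.1 i p.2⟩
  have hg (i) : Function.Injective (g i) := by
    rintro ⟨j, s⟩ ⟨j', t⟩ hst
    obtain ⟨rfl, hst⟩ := Sigma.mk.inj hst
    exact Prod.ext rfl ((h j i).injective (eq_of_heq hst))
  choose a hnormal htwist hspec hsq using fun i ↦ exists_isStarNormal_mul_star_eq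
    (conjTranspose_submatrix_mul_submatrix hUU (hg i))
    (mul_submatrix_eq_submatrix_mul_diagonal hvU (g i))
  refine ⟨a, hnormal, htwist, hspec, ?_⟩
  rw [Finset.sum_congr rfl fun i _ ↦ hsq i]
  refine isUnit_sum_submatrix_mul_conjTranspose hUU' ?_
  rintro ⟨j, x⟩
  obtain ⟨i, s, rfl⟩ := hcover j x
  exact ⟨i, (j, s), rfl⟩

end Construction

theorem sInf_natCast_image_of_isLeast {S : Set ℕ} {q : ℕ} (hS : IsLeast S q) (hq : 0 < q) :
    sInf ((fun N : ℕ ↦ (N : ℕ∞)) '' {N | N + 1 ∈ S}) = (q : ℕ∞) - 1 := by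
  obtain ⟨r, rfl⟩ := Nat.exists_eq_add_one.2 hq
  have hr : IsLeast {N | N + 1 ∈ S} r := ⟨hS.1, fun N hN ↦ Nat.le_of_succ_le_succ (hS.2 hN)⟩
  rw [((Nat.mono_cast (α := ℕ∞)).map_isLeast hr).isGLB.sInf_eq]
  rfl

section EigDim

variable {n k : ℕ} {v : Matrix (Fin n) (Fin n) ℂ}

theorem eigDim_le_maxEigDim (j : Fin k) : eigDim n k v j ≤ maxEigDim n k v :=
  Finset.le_sup (f := fun j : Fin k ↦ eigDim n k v j) (Finset.mem_univ j)

theorem minEigDim_le_eigDim (j : Fin k) : minEigDim n k v ≤ eigDim n k v j :=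
  Nat.sInf_le ⟨j, rfl⟩

theorem qtMat_le_iff (hmin : 0 < minEigDim n k v) {N : ℕ} :
    qtMat n k v ≤ N ↔ maxEigDim n k v ≤ N * minEigDim n k v := by
  rw [qtMat, Nat.ceil_le, div_le_iff₀ (Nat.cast_pos.2 hmin)]
  exact_mod_cast Iff.rfl

variable [NeZero k]

theorem exists_eigDim_eq_minEigDim (v : Matrix (Fin n) (Fin n) ℂ) :
    ∃ j : Fin k, eigDim n k v j = minEigDim n k v := by
  obtain ⟨j, hj⟩ := Nat.sInf_mem (s := {d | ∃ j : Fin k, d = eigDim n k v j}) ⟨_, 0, rfl⟩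
  exact ⟨j, hj.symm⟩

theorem minEigDim_pos
    (hfull : ∀ j : Fin k, End.eigenspace (toLin' v) (ltZeta k ^ (j : ℕ)) ≠ ⊥) :
    0 < minEigDim n k v := by
  obtain ⟨j, hj⟩ := exists_eigDim_eq_minEigDim (k := k) v
  rw [← hj]
  exact Nat.pos_of_ne_zero (Submodule.finrank_eq_zero.not.2 (hfull j))

theorem qtMat_pos (hmin : 0 < minEigDim n k v) : 0 < qtMat n k v := by
  have hmax : 0 < maxEigDim n k v :=
    hmin.trans_le ((minEigDim_le_eigDim 0).trans (eigDim_le_maxEigDim 0))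
  exact Nat.ceil_pos.2 (div_pos (Nat.cast_pos.2 hmax) (Nat.cast_pos.2 hmin))

theorem maxEigDim_le_mul_minEigDim (hv : v ∈ unitary (Matrix (Fin n) (Fin n) ℂ)) {N : ℕ}
    {a : Fin N → Matrix (Fin n) (Fin n) ℂ} (hnormal : ∀ i, IsStarNormal (a i))
    (ha : ∀ i, v * a i * star v = ltZeta k • a i) (hu : IsUnit (∑ i, a i * star (a i))) :
    maxEigDim n k v ≤ N * minEigDim n k v := by
  obtain ⟨j₀, hj₀⟩ := exists_eigDim_eq_minEigDim (k := k) v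
  refine Finset.sup_le fun j _ ↦ ?_
  have hpow : ltZeta k ^ (j₀ + (k - j) : ℕ) * ltZeta k ^ (j : ℕ) = ltZeta k ^ (j₀ : ℕ) := by
    rw [← pow_add, add_assoc, Nat.sub_add_cancel j.2.le, pow_add,
      isPrimitiveRoot_ltZeta.pow_eq_one, mul_one]
  have hle := finrank_eigenspace_le_card_mul hv ltZeta_mem_unitary hnormal ha hu
    (ltZeta k ^ (j : ℕ)) (j₀ + (k - j))
  rw [hpow, Fintype.card_fin] at hle
  exact hj₀ ▸ hle

end EigDim

/-- For a unitary `v ∈ M_n(ℂ)` with `v^k = 1` and all eigenspaces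
`E_j = ker(v - ζ^j)` nonzero, the least cardinality of a family of normal matrices
`a₁, …, a_N` with `v aᵢ v* = ζ aᵢ`, `σ(aᵢ) ⊆ ✲_k` and `Σ aᵢ aᵢ*` invertible equals
`⌈(max_j dim E_j)/(min_j dim E_j)⌉`; equivalently,
`wdim(M_n(ℂ), Ad v) = ⌈max/min⌉ - 1`. -/
theorem stmt2 (n k : ℕ) (hk : 0 < k) (v : Matrix (Fin n) (Fin n) ℂ)
    (hv : v ∈ unitary (Matrix (Fin n) (Fin n) ℂ)) (hvk : v ^ k = 1)
    (hfull : ∀ j : Fin k,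
      Module.End.eigenspace (Matrix.toLin' v) (ltZeta k ^ (j : ℕ)) ≠ ⊥) :
    IsLeast {N : ℕ | ∃ a : Fin N → Matrix (Fin n) (Fin n) ℂ,
        (∀ i, IsStarNormal (a i)) ∧
        (∀ i, v * a i * star v = ltZeta k • a i) ∧
        (∀ i, spectrum ℂ (a i) ⊆ ltAsterisk k) ∧
        IsUnit (∑ i, a i * star (a i))}
      (qtMat n k v)
    ∧ wdimConj n k v = (qtMat n k v : ℕ∞) - 1 := by
  have : NeZero k := ⟨hk.ne'⟩
  have hmin : 0 < minEigDim n k v := minEigDim_pos hfull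
  have hqt : maxEigDim n k v ≤ qtMat n k v * minEigDim n k v := (qtMat_le_iff hmin).1 le_rfl
  suffices hleast : IsLeast _ (qtMat n k v) from
    ⟨hleast, sInf_natCast_image_of_isLeast hleast (qtMat_pos hmin)⟩
  constructor
  · exact exists_family_of_finrank_le_mul hv hvk minEigDim_le_eigDim
      fun j ↦ (eigDim_le_maxEigDim j).trans hqt
  · rintro N ⟨a, hnormal, htwist, -, hunit⟩
    exact (qtMat_le_iff hmin).2 (maxEigDim_le_mul_minEigDim hv hnormal htwist hunit)
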